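/- arXiv:math-ph/0403006 — 3 statements merged into one kernel-verified Lean document; each statement's English description precedes it below -/
import Mathlib

section
/- Fix μ > 0. For all real E, E' in (−∞, 0) \ {−μ²}, the operators R(E)ψ = R₀(E)ψ + (π log(−E/μ²))^{-1} ⟨Ω_E, ψ⟩ Ω_E satisfy the first resolvent identity R(E) − R(E') = (E − E') · R(E) ∘ R(E') as bounded operators on L²(ℝ²). -/
open MeasureTheory

lemma aux_radial (a b : ℝ) (ha : 0 < a) (hb : 0 < b) (hab : a ≠ b) :
    ∫ y in Set.Ioi (0:ℝ), y * ((y ^ 2 + a)⁻¹ * (y ^ 2 + b)⁻¹) =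
      (Real.log a - Real.log b) / (2 * (a - b)) := by
  have hd : a - b ≠ 0 := sub_ne_zero.2 hab
  have h := integral_Ioi_of_hasDerivAt_of_nonneg' (a := 0)
    (g := fun y : ℝ => (Real.log (y ^ 2 + b) - Real.log (y ^ 2 + a)) / (2 * (a - b)))
    (g' := fun y : ℝ => y * ((y ^ 2 + a)⁻¹ * (y ^ 2 + b)⁻¹)) (l := 0) ?_ ?_ ?_
  · rw [h]; simp; rw [← neg_div]; ring
  · intro y _
    have h1 : y ^ 2 + a ≠ 0 := by positivity
    have h2 : y ^ 2 + b ≠ 0 := by positivity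
    have := ((((hasDerivAt_id y).pow 2).add_const b).log h2).sub
      ((((hasDerivAt_id y).pow 2).add_const a).log h1) |>.div_const (2 * (a - b))
    refine this.congr_deriv ?_
    simp
    field_simp
    ring
  · intro y hy
    have : 0 < y := hy
    positivity
  · have hT : ∀ c : ℝ, Filter.Tendsto (fun y : ℝ => y ^ 2 + c) Filter.atTop Filter.atTop :=
      fun c => Filter.tendsto_atTop_add_const_right _ _ (Filter.tendsto_pow_atTop two_ne_zero)
    have h1 : Filter.Tendsto (fun y : ℝ => (y ^ 2 + b) / (y ^ 2 + a)) Filter.atTop (nhds 1) := by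
      have : Filter.Tendsto (fun y : ℝ => 1 + (b - a) * (y ^ 2 + a)⁻¹) Filter.atTop
          (nhds (1 + (b - a) * 0)) :=
        ((hT a).inv_tendsto_atTop.const_mul (b - a)).const_add 1
      simp only [mul_zero, add_zero] at this
      refine this.congr fun y => ?_
      have h1 : y ^ 2 + a ≠ 0 := by positivity
      field_simp
      ring
    have h2 := (h1.log one_ne_zero).div_const (2 * (a - b))
    simp only [Real.log_one, zero_div] at h2
    refine h2.congr fun y => ?_
    rw [Real.log_div (by positivity) (by positivity)]

lemma aux_plane (a b : ℝ) (ha : 0 < a) (hb : 0 < b) (hab : a ≠ b) :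
    ∫ p : EuclideanSpace ℝ (Fin 2), (‖p‖ ^ 2 + a)⁻¹ * (‖p‖ ^ 2 + b)⁻¹ =
      Real.pi * ((Real.log a - Real.log b) / (a - b)) := by
  have h := integral_fun_norm_addHaar (volume : Measure (EuclideanSpace ℝ (Fin 2)))
    (fun y : ℝ => (y ^ 2 + a)⁻¹ * (y ^ 2 + b)⁻¹)
  have hd : a - b ≠ 0 := sub_ne_zero.2 hab
  rw [h]
  simp only [finrank_euclideanSpace, Fintype.card_fin, smul_eq_mul, Nat.add_one_sub_one, pow_one]
  rw [aux_radial a b ha hb hab]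
  simp [Measure.real, EuclideanSpace.volume_ball_fin_two, Real.pi_pos.le]
  field_simp


lemma aux_alg {H : Type*} [NormedAddCommGroup H] [InnerProductSpace ℂ H] (R R' : H →L[ℂ] H)
    (Ω Ω' : H) (d L L' : ℂ) (l1 : L ≠ 0) (l2 : L' ≠ 0)
    (e1 : ∀ ψ, d • R (R' ψ) = R ψ - R' ψ) (e2 : d • R Ω' = Ω - Ω')
    (e3 : ∀ ψ, d * inner ℂ Ω (R' ψ) = inner ℂ Ω ψ - inner ℂ Ω' ψ)
    (e4 : d * inner ℂ Ω Ω' = L' - L) :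
    (R + L⁻¹ • (innerSL ℂ Ω).smulRight Ω) - (R' + L'⁻¹ • (innerSL ℂ Ω').smulRight Ω') =
      d • ((R + L⁻¹ • (innerSL ℂ Ω).smulRight Ω).comp
        (R' + L'⁻¹ • (innerSL ℂ Ω').smulRight Ω')) := by
  have e5 : d * (L⁻¹ * L'⁻¹ * inner ℂ Ω Ω') = L⁻¹ - L'⁻¹ := by
    have : d * (L⁻¹ * L'⁻¹ * inner ℂ Ω Ω') = L⁻¹ * L'⁻¹ * (L' - L) := by rw [← e4]; ring
    rw [this]; field_simp
  refine ContinuousLinearMap.ext fun ψ => ?_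
  simp only [sub_apply, ContinuousLinearMap.add_apply,
    smul_apply, ContinuousLinearMap.comp_apply,
    ContinuousLinearMap.smulRight_apply, innerSL_apply_apply, map_add, map_smul,
    inner_add_right, inner_smul_right]
  have f1 := e1 ψ
  have f3 := e3 ψ
  generalize R (R' ψ) = A at *
  generalize R Ω' = B at *
  generalize (inner ℂ Ω (R' ψ) : ℂ) = x at *
  generalize (inner ℂ Ω' ψ : ℂ) = y at *
  generalize (inner ℂ Ω ψ : ℂ) = z at *
  generalize (inner ℂ Ω Ω' : ℂ) = w at *
  have hR : R ψ = d • A + R' ψ := by rw [f1]; abel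
  have hO : Ω' = Ω - d • B := by rw [e2]; abel
  have hc : L⁻¹ * z - L'⁻¹ * y = d * (L⁻¹ * x) + d * (L⁻¹ * L'⁻¹ * w) * y := by
    rw [e5]; linear_combination (-L⁻¹) * f3
  rw [hR, hO]
  clear hR hO e1 e2 e3 f1
  linear_combination (norm := skip) hc • Ω
  module

set_option maxHeartbeats 1000000 in
/-- first resolvent identity
`R(E) − R(E') = (E − E') R(E) R(E')` for the point-interaction resolvents
`R(E)ψ = R₀(E)ψ + (π log(−E/μ²))⁻¹ ⟨Ω_E, ψ⟩ Ω_E`, for `E, E' ∈ (−∞,0) \ {−μ²}`. -/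
theorem point_resolvent_identity (μ : ℝ) (hμ : 0 < μ) (E E' : ℝ)
    (hE : E < 0) (hE' : E' < 0) (hne : E ≠ -μ ^ 2) (hne' : E' ≠ -μ ^ 2)
    (Ω Ω' : Lp ℂ 2 (volume : Measure (EuclideanSpace ℝ (Fin 2))))
    (hΩ : Ω =ᵐ[volume] fun p => ((‖p‖ ^ 2 - E : ℝ) : ℂ)⁻¹)
    (hΩ' : Ω' =ᵐ[volume] fun p => ((‖p‖ ^ 2 - E' : ℝ) : ℂ)⁻¹)
    (R₀ R₀' : Lp ℂ 2 (volume : Measure (EuclideanSpace ℝ (Fin 2))) →L[ℂ]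
      Lp ℂ 2 (volume : Measure (EuclideanSpace ℝ (Fin 2))))
    (hR₀ : ∀ ψ, R₀ ψ =ᵐ[volume] fun p => ((‖p‖ ^ 2 - E : ℝ) : ℂ)⁻¹ * ψ p)
    (hR₀' : ∀ ψ, R₀' ψ =ᵐ[volume] fun p => ((‖p‖ ^ 2 - E' : ℝ) : ℂ)⁻¹ * ψ p) :
    (R₀ + ((Real.pi * Real.log (-E / μ ^ 2) : ℝ) : ℂ)⁻¹ • (innerSL ℂ Ω).smulRight Ω) -
        (R₀' + ((Real.pi * Real.log (-E' / μ ^ 2) : ℝ) : ℂ)⁻¹ • (innerSL ℂ Ω').smulRight Ω') =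
      ((E - E' : ℝ) : ℂ) •
        ((R₀ + ((Real.pi * Real.log (-E / μ ^ 2) : ℝ) : ℂ)⁻¹ • (innerSL ℂ Ω).smulRight Ω).comp
          (R₀' + ((Real.pi * Real.log (-E' / μ ^ 2) : ℝ) : ℂ)⁻¹ • (innerSL ℂ Ω').smulRight Ω')) := by
  have nz : ∀ (e : ℝ), e < 0 → ∀ p : EuclideanSpace ℝ (Fin 2),
      ((‖p‖ ^ 2 - e : ℝ) : ℂ) ≠ 0 := by
    intro e he p
    have : ‖p‖ ^ 2 - e ≠ 0 := by nlinarith [sq_nonneg ‖p‖]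
    exact_mod_cast this
  have key : ∀ p : EuclideanSpace ℝ (Fin 2), ((E - E' : ℝ) : ℂ) *
      (((‖p‖ ^ 2 - E : ℝ) : ℂ)⁻¹ * ((‖p‖ ^ 2 - E' : ℝ) : ℂ)⁻¹) =
      ((‖p‖ ^ 2 - E : ℝ) : ℂ)⁻¹ - ((‖p‖ ^ 2 - E' : ℝ) : ℂ)⁻¹ := by
    intro p
    have h1 := nz E hE p
    have h2 := nz E' hE' p
    field_simp
    push_cast
    ring
  have e1 : ∀ ψ, ((E - E' : ℝ) : ℂ) • R₀ (R₀' ψ) = R₀ ψ - R₀' ψ := by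
    intro ψ
    apply Lp.ext
    filter_upwards [Lp.coeFn_smul ((E - E' : ℝ) : ℂ) (R₀ (R₀' ψ)), Lp.coeFn_sub (R₀ ψ) (R₀' ψ),
      hR₀ ψ, hR₀' ψ, hR₀ (R₀' ψ)] with p h1 h2 h3 h4 h5
    rw [h1, h2, Pi.smul_apply, Pi.sub_apply, h3, h4, h5, h4, smul_eq_mul]
    linear_combination (ψ p) * key p
  have e2 : ((E - E' : ℝ) : ℂ) • R₀ Ω' = Ω - Ω' := by
    apply Lp.ext
    filter_upwards [Lp.coeFn_smul ((E - E' : ℝ) : ℂ) (R₀ Ω'), Lp.coeFn_sub Ω Ω',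
      hR₀ Ω', hΩ, hΩ'] with p h1 h2 h3 h4 h5
    rw [h1, h2, Pi.smul_apply, Pi.sub_apply, h3, h4, h5, smul_eq_mul]
    exact key p
  have e2' : ((E - E' : ℝ) : ℂ) • R₀' Ω = Ω - Ω' := by
    apply Lp.ext
    filter_upwards [Lp.coeFn_smul ((E - E' : ℝ) : ℂ) (R₀' Ω), Lp.coeFn_sub Ω Ω',
      hR₀' Ω, hΩ, hΩ'] with p h1 h2 h3 h4 h5
    rw [h1, h2, Pi.smul_apply, Pi.sub_apply, h3, h4, h5, smul_eq_mul]
    rw [← key p]; ring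
  have sa : ∀ φ ψ, inner ℂ φ (R₀' ψ) = inner ℂ (R₀' φ) ψ := by
    intro φ ψ
    rw [L2.inner_def, L2.inner_def]
    apply integral_congr_ae
    filter_upwards [hR₀' φ, hR₀' ψ] with p h1 h2
    rw [h1, h2]
    simp only [RCLike.inner_apply, map_mul, map_inv₀, Complex.conj_ofReal]
    ring
  have e3 : ∀ ψ, ((E - E' : ℝ) : ℂ) * inner ℂ Ω (R₀' ψ) = inner ℂ Ω ψ - inner ℂ Ω' ψ := by
    intro ψ
    rw [sa, ← inner_sub_left, ← e2', inner_smul_left, Complex.conj_ofReal]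
  have hlog : ∀ e : ℝ, e < 0 → Real.log (-e / μ ^ 2) = Real.log (-e) - Real.log (μ ^ 2) := by
    intro e he
    exact Real.log_div (by linarith) (by positivity)
  have e4 : ((E - E' : ℝ) : ℂ) * inner ℂ Ω Ω' =
      ((Real.pi * Real.log (-E' / μ ^ 2) : ℝ) : ℂ) - ((Real.pi * Real.log (-E / μ ^ 2) : ℝ) : ℂ) := by
    by_cases hEE : E = E'
    · subst hEE; simp
    have hi : inner ℂ Ω Ω' = ((Real.pi * ((Real.log (-E) - Real.log (-E')) / (-E - -E')) : ℝ) : ℂ) := by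
      rw [← aux_plane (-E) (-E') (by linarith) (by linarith) (fun h => hEE (neg_injective h)),
        ← integral_complex_ofReal, L2.inner_def]
      apply integral_congr_ae
      filter_upwards [hΩ, hΩ'] with p h1 h2
      rw [h1, h2]
      simp only [RCLike.inner_apply, map_inv₀, Complex.conj_ofReal]
      push_cast
      ring
    rw [hi, hlog E hE, hlog E' hE']
    have hd : -E - -E' ≠ 0 := fun h => hEE (by linarith)
    norm_cast
    field_simp
    ring
  have lz : ∀ e : ℝ, e < 0 → e ≠ -μ ^ 2 → ((Real.pi * Real.log (-e / μ ^ 2) : ℝ) : ℂ) ≠ 0 := by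
    intro e he hn
    have hp : 0 < -e / μ ^ 2 := div_pos (by linarith) (by positivity)
    have h1 : -e / μ ^ 2 ≠ 1 := by
      intro h
      rw [div_eq_one_iff_eq (by positivity)] at h
      exact hn (by linarith)
    exact_mod_cast mul_ne_zero Real.pi_ne_zero (Real.log_ne_zero_of_pos_of_ne_one hp h1)
  have l1 := lz E hE hne
  have l2 := lz E' hE' hne'
  exact aux_alg R₀ R₀' Ω Ω' _ _ _ l1 l2 e1 e2 e3 e4
end

section
/- Let u : ℝ² → ℂ be a Schwartz function whose Fourier transform has compact support not containing the origin (i.e. the support of û is a compact subset of ℝ² \ {0}). Then there is a constant C such that for all Λ ≥ 1, |∫_{{q ∈ ℝ² : |q| ≤ Λ}} u(q) dq| ≤ C Λ^{-2}. -/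
open MeasureTheory FourierTransform

/-- if `u : ℝ² → ℂ` is a Schwartz function whose Fourier transform has compact
support not containing the origin, then there is a constant `C` such that for all `Λ ≥ 1`,
`|∫_{|q| ≤ Λ} u(q) dq| ≤ C Λ⁻²`. -/
theorem disc_integral_decay (u : SchwartzMap (EuclideanSpace ℝ (Fin 2)) ℂ)
    (hsupp : HasCompactSupport (𝓕 ⇑u))
    (h0 : (0 : EuclideanSpace ℝ (Fin 2)) ∉ tsupport (𝓕 ⇑u)) :
    ∃ C : ℝ, ∀ Λ : ℝ, 1 ≤ Λ →
      ‖∫ q in {q : EuclideanSpace ℝ (Fin 2) | ‖q‖ ≤ Λ}, u q‖ ≤ C * Λ⁻¹ ^ 2 := by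
  have hz : ∫ q, u q = 0 := by
    have h1 : 𝓕 (⇑u) 0 = 0 := image_eq_zero_of_notMem_tsupport h0
    rw [Real.fourier_eq] at h1
    simpa using h1
  have hi : Integrable (fun q => ‖q‖ ^ 2 * ‖u q‖) volume := u.integrable_pow_mul volume 2
  have hu : Integrable (⇑u) volume := u.integrable
  refine ⟨∫ q, ‖q‖ ^ 2 * ‖u q‖, fun Λ hΛ => ?_⟩
  have hpos : 0 < Λ := by linarith
  have hs : MeasurableSet {q : EuclideanSpace ℝ (Fin 2) | ‖q‖ ≤ Λ} :=
    measurableSet_le measurable_norm measurable_const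
  have hadd := integral_add_compl hs hu
  rw [hz] at hadd
  rw [eq_neg_of_add_eq_zero_left hadd, norm_neg]
  calc _ ≤ ∫ q in {q : EuclideanSpace ℝ (Fin 2) | ‖q‖ ≤ Λ}ᶜ, ‖u q‖ :=
        norm_integral_le_integral_norm _
    _ ≤ ∫ q in {q : EuclideanSpace ℝ (Fin 2) | ‖q‖ ≤ Λ}ᶜ, (‖q‖ ^ 2 * ‖u q‖) * Λ⁻¹ ^ 2 := by
        refine setIntegral_mono_on hu.norm.integrableOn (hi.mul_const _).integrableOn
          hs.compl fun q hq => ?_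
        have hq' : Λ ≤ ‖q‖ := by
          simp only [Set.mem_compl_iff, Set.mem_setOf_eq, not_le] at hq
          exact hq.le
        have h1 : 1 ≤ ‖q‖ * Λ⁻¹ := by
          rw [← div_eq_mul_inv, le_div_iff₀ hpos]
          linarith
        calc ‖u q‖ = 1 * ‖u q‖ := by ring
          _ ≤ (‖q‖ * Λ⁻¹) ^ 2 * ‖u q‖ := by
            gcongr
            exact one_le_pow₀ h1
          _ = _ := by ring
    _ ≤ ∫ q, (‖q‖ ^ 2 * ‖u q‖) * Λ⁻¹ ^ 2 :=
        setIntegral_le_integral (hi.mul_const _)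
          (Filter.Eventually.of_forall fun q => by positivity)
    _ = _ := integral_mul_const _ _
end

section
/- Let u : ℝ² → ℂ be a Schwartz function whose Fourier transform has compact support not containing the origin, and fix μ > 0. Then lim_{Λ→∞} g_Λ(μ) · Λ · |∫_{{q ∈ ℝ² : |q| ≤ Λ}} u(q) dq| = 0. Equivalently, the L²(ℝ²)-norm of the function p ↦ (2π)^{-2} g_Λ(μ) ρ_Λ(p) ∫_{{q : |q| ≤ Λ}} u(q) dq tends to 0 as Λ → ∞, so that H_Λ u → H₀ u in L²(ℝ²) for such u, where H₀ is multiplication by |p|². -/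
open MeasureTheory FourierTransform Filter

/-- The disc of radius `Λ` in `ℝ²`. -/
def disc (Λ : ℝ) : Set (EuclideanSpace ℝ (Fin 2)) := {p | ‖p‖ ≤ Λ}

/-- The renormalized coupling constant
`g_Λ(μ) = (2π)² (∫_{|p| ≤ Λ} (|p|² + μ²)⁻¹ dp)⁻¹`. -/
noncomputable def gCoupling (μ Λ : ℝ) : ℝ :=
  (2 * Real.pi) ^ 2 * (∫ p in disc Λ, (‖p‖ ^ 2 + μ ^ 2)⁻¹)⁻¹

theorem disc_eq_aux (Λ : ℝ) : disc Λ = Metric.closedBall 0 Λ := by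
  ext p; simp [disc]

theorem gCoupling_integrableOn_aux (μ Λ : ℝ) (hμ : 0 < μ) :
    IntegrableOn (fun p : EuclideanSpace ℝ (Fin 2) => (‖p‖ ^ 2 + μ ^ 2)⁻¹) (disc Λ) := by
  rw [disc_eq_aux]
  apply ContinuousOn.integrableOn_compact (isCompact_closedBall 0 Λ)
  apply Continuous.continuousOn
  exact Continuous.inv₀ (by fun_prop) (fun p => by positivity)

theorem gCoupling_int_pos_aux (μ : ℝ) (hμ : 0 < μ) :
    0 < ∫ p in disc 1, (‖p‖ ^ 2 + μ ^ 2)⁻¹ := by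
  rw [setIntegral_pos_iff_support_of_nonneg_ae
    (ae_of_all _ fun p => by simp only [Pi.zero_apply]; positivity)
    (gCoupling_integrableOn_aux μ 1 hμ)]
  have : Function.support (fun p : EuclideanSpace ℝ (Fin 2) => (‖p‖ ^ 2 + μ ^ 2)⁻¹)
      = Set.univ := by
    ext p
    simp only [Function.mem_support, Set.mem_univ, iff_true]
    positivity
  rw [this, Set.univ_inter, disc_eq_aux]
  exact Metric.measure_closedBall_pos _ _ one_pos

theorem gCoupling_nonneg_aux (μ Λ : ℝ) : 0 ≤ gCoupling μ Λ := by
  unfold gCoupling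
  have : 0 ≤ ∫ p in disc Λ, (‖p‖ ^ 2 + μ ^ 2)⁻¹ :=
    integral_nonneg fun p => by simp only [Pi.zero_apply]; positivity
  positivity

theorem gCoupling_le_aux (μ Λ : ℝ) (hμ : 0 < μ) (hΛ : 1 ≤ Λ) :
    gCoupling μ Λ ≤ gCoupling μ 1 := by
  unfold gCoupling
  refine mul_le_mul_of_nonneg_left ?_ (by positivity)
  refine inv_anti₀ (gCoupling_int_pos_aux μ hμ) ?_
  refine setIntegral_mono_set (gCoupling_integrableOn_aux μ Λ hμ)
    (ae_of_all _ fun p => by simp only [Pi.zero_apply]; positivity) ?_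
  exact Filter.Eventually.of_forall fun p (hp : ‖p‖ ≤ 1) => (hp.trans hΛ : ‖p‖ ≤ Λ)

theorem disc_integral_bound_aux (u : SchwartzMap (EuclideanSpace ℝ (Fin 2)) ℂ)
    (hu : ∫ q, u q = 0) (Λ : ℝ) (hΛ : 1 ≤ Λ) :
    Λ ^ 2 * ‖∫ q in disc Λ, u q‖ ≤ ∫ q, ‖q‖ ^ 2 * ‖u q‖ := by
  have hm : MeasurableSet (disc Λ) := by
    rw [disc_eq_aux]; exact Metric.isClosed_closedBall.measurableSet
  have hint : Integrable (fun q => u q) := u.integrable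
  have h2 : Integrable (fun q : EuclideanSpace ℝ (Fin 2) => ‖q‖ ^ 2 * ‖u q‖) :=
    u.integrable_pow_mul volume 2
  have hsum := integral_add_compl hm hint
  rw [hu] at hsum
  rw [eq_neg_of_add_eq_zero_left hsum, norm_neg]
  calc Λ ^ 2 * ‖∫ q in (disc Λ)ᶜ, u q‖
      ≤ Λ ^ 2 * ∫ q in (disc Λ)ᶜ, ‖u q‖ := by
        gcongr; exact norm_integral_le_integral_norm _
    _ = ∫ q in (disc Λ)ᶜ, Λ ^ 2 * ‖u q‖ := (integral_const_mul _ _).symm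
    _ ≤ ∫ q in (disc Λ)ᶜ, ‖q‖ ^ 2 * ‖u q‖ := by
        refine setIntegral_mono_on (hint.norm.const_mul _).integrableOn h2.integrableOn
          hm.compl fun q hq => ?_
        have : Λ < ‖q‖ := not_le.mp hq
        gcongr
    _ ≤ ∫ q, ‖q‖ ^ 2 * ‖u q‖ :=
        setIntegral_le_integral h2 (ae_of_all _ fun p => by simp only [Pi.zero_apply]; positivity)

/-- for a Schwartz function `u` on `ℝ²` whose Fourier transform has compact
support avoiding the origin, and `μ > 0`,
`g_Λ(μ) · Λ · |∫_{|q| ≤ Λ} u(q) dq| → 0` as `Λ → ∞`; equivalently the `L²`-norm of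
`p ↦ (2π)⁻² g_Λ(μ) ρ_Λ(p) ∫_{|q| ≤ Λ} u(q) dq` tends to `0`, so `H_Λ u → H₀ u` in `L²(ℝ²)`. -/
theorem coupling_times_disc_integral_tendsto_zero
    (u : SchwartzMap (EuclideanSpace ℝ (Fin 2)) ℂ)
    (hsupp : HasCompactSupport (𝓕 ⇑u))
    (h0 : (0 : EuclideanSpace ℝ (Fin 2)) ∉ tsupport (𝓕 ⇑u))
    (μ : ℝ) (hμ : 0 < μ) :
    Tendsto (fun Λ : ℝ => gCoupling μ Λ * Λ * ‖∫ q in disc Λ, u q‖) atTop (nhds 0) ∧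
    Tendsto (fun Λ : ℝ =>
        eLpNorm (fun p : EuclideanSpace ℝ (Fin 2) =>
          (disc Λ).indicator
            (fun _ => ((gCoupling μ Λ / (2 * Real.pi) ^ 2 : ℝ) : ℂ) * ∫ q in disc Λ, u q) p)
          2 volume)
      atTop (nhds 0) := by
  have hu : ∫ q, u q = 0 := by
    have h := image_eq_zero_of_notMem_tsupport h0
    simpa [Real.fourier_eq] using h
  have key : Tendsto (fun Λ : ℝ => gCoupling μ Λ * Λ * ‖∫ q in disc Λ, u q‖) atTop (nhds 0) := by
    set C := ∫ q, ‖q‖ ^ 2 * ‖u q‖ with hC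
    have hlim : Tendsto (fun Λ : ℝ => gCoupling μ 1 * C * Λ⁻¹) atTop (nhds 0) := by
      simpa using tendsto_inv_atTop_zero.const_mul (gCoupling μ 1 * C)
    refine tendsto_of_tendsto_of_tendsto_of_le_of_le' tendsto_const_nhds hlim ?_ ?_
    · filter_upwards [eventually_ge_atTop 1] with Λ hΛ
      have := gCoupling_nonneg_aux μ Λ
      positivity
    · filter_upwards [eventually_ge_atTop 1] with Λ hΛ
      have hb := disc_integral_bound_aux u hu Λ hΛ
      have hpos : 0 < Λ := by linarith
      have h1 : Λ * ‖∫ q in disc Λ, u q‖ ≤ C * Λ⁻¹ := by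
        rw [← div_eq_mul_inv, le_div_iff₀ hpos]
        linarith
      rw [mul_assoc, mul_assoc]
      exact mul_le_mul (gCoupling_le_aux μ Λ hμ hΛ) h1 (by positivity) (gCoupling_nonneg_aux μ 1)
  refine ⟨key, ?_⟩
  have hlim : Tendsto (fun Λ : ℝ => ENNReal.ofReal
      (√Real.pi / (2 * Real.pi) ^ 2 * (gCoupling μ Λ * Λ * ‖∫ q in disc Λ, u q‖)))
      atTop (nhds 0) := by
    have := ENNReal.tendsto_ofReal (key.const_mul (√Real.pi / (2 * Real.pi) ^ 2))
    simpa using this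
  refine hlim.congr' ?_
  filter_upwards [eventually_ge_atTop 1] with Λ hΛ
  have hpos : 0 < Λ := by linarith
  have hm : MeasurableSet (disc Λ) := by
    rw [disc_eq_aux]; exact Metric.isClosed_closedBall.measurableSet
  have hg := gCoupling_nonneg_aux μ Λ
  have hv : volume (disc Λ) = ENNReal.ofReal (Λ ^ 2 * Real.pi) := by
    rw [disc_eq_aux, EuclideanSpace.volume_closedBall_fin_two,
      ENNReal.ofReal_mul (by positivity), ENNReal.ofReal_pow hpos.le]
  rw [eLpNorm_indicator_const hm (by norm_num) (by norm_num), hv,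
    ENNReal.ofReal_rpow_of_nonneg (by positivity) (by norm_num), ← ofReal_norm,
    ← ENNReal.ofReal_mul (by positivity)]
  congr 1
  have : (Λ ^ 2 * Real.pi) ^ (1 / (2 : ENNReal).toReal) = Λ * √Real.pi := by
    rw [ENNReal.toReal_ofNat, ← Real.sqrt_eq_rpow, Real.sqrt_mul (by positivity),
      Real.sqrt_sq hpos.le]
  rw [this, norm_mul, Complex.norm_real, Real.norm_of_nonneg (by positivity)]
  ring
end
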